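/- arXiv:1601.03179 — 3 statements merged into one kernel-verified Lean document; each statement's English description precedes it below -/
import Mathlib

section
/- Fix γ ∈ (0,1). For every (y,z) ∈ [0,1]² with |y−z| ≥ γ, one has (1/2) ∫₀¹ |f_{(y,z)}(x) − φ_γ(x)| dx ≤ (1/2) ∫₀¹ |f_{(γ,0)}(x) − φ_γ(x)| dx. That is, among all restricted symmetric triangular distributions with parameter γ, the total variation distance to the intensity measure with density φ_γ is maximized by the triangular distribution supported on [0,γ] (equivalently, by symmetry, on [1−γ,1]). -/
open MeasureTheory Real

/-- The symmetric triangular density on `[0,1]` with support endpoints `y` and `z`. -/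
noncomputable def triDens (y z x : ℝ) : ℝ :=
  (2 / |y - z|) * max 0 (1 - (2 / |y - z|) * |x - (y + z) / 2|)

/-- The region of admissible endpoint pairs for the restricted triangular
distributions: pairs `(y,z) ∈ [0,1]²` with `|y−z| ≥ γ`. -/
def restrictedRegion (γ : ℝ) : Set (ℝ × ℝ) :=
  {p : ℝ × ℝ | p.1 ∈ Set.Icc (0 : ℝ) 1 ∧ p.2 ∈ Set.Icc (0 : ℝ) 1 ∧ γ ≤ |p.1 - p.2|}

/-- The density `φ_γ` of the intensity measure of a random restricted symmetric
triangular distribution with parameter `γ`. -/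
noncomputable def phiGamma (γ x : ℝ) : ℝ :=
  ((1 - γ) ^ 2)⁻¹ * ∫ p in restrictedRegion γ, triDens p.1 p.2 x

/-!
The total variation distance of two probability densities is one minus their overlap
`∫ min (f, g)`, so the overlap with `φ_γ` has to be minimised. The density `φ_γ` is symmetric and
unimodal about `1 / 2`, being a mixture over the widths `w ∈ [γ, 1]` of sliding-window integrals of
a triangle.

*Position.* Reflecting a triangle so that its centre comes closer to `1 / 2` does not decrease the
overlap, by a two-point rearrangement. Hence triangles with left endpoint `0` are the worst of their
width.

*Width.* It remains to compare the triangles `T_γ` and `T_w` on `[0, γ]` and `[0, w]`, `γ ≤ w ≤ 1`.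
If `γ ≤ 1 / 2`, then `φ_γ(x) ≤ 8 x² / γ`, and `T_w` dominates after adding the values of the
integrand at `x` and `w - x`. If `γ ≥ 1 / 2`, then `φ_γ(x) ≤ 4 μ x` on `[0, 1 / 2]` with
`μ = (γ + 2) / (3 γ)`. When `μ w² ≤ 1` this puts `φ_γ` below the left half of `T_w` and the same
pairing applies; otherwise both overlaps are estimated through the mass `m` of `φ_γ` on
`[0, w / 2]`, namely `overlap T_γ φ_γ ≤ m + 2 (1 - w / (2 γ))²` and
`2 m / (μ w²) ≤ overlap T_w φ_γ`.
-/

section Reflection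

theorem integral_le_integral_of_add_reflect_le {f g : ℝ → ℝ} (hf : Integrable f)
    (hg : Integrable g) (s : ℝ) (h : ∀ x, f x + f (s - x) ≤ g x + g (s - x)) :
    ∫ x, f x ≤ ∫ x, g x := by
  have hsum : ∫ x, (f x + f (s - x)) ≤ ∫ x, (g x + g (s - x)) :=
    integral_mono (hf.add (hf.comp_sub_left s)) (hg.add (hg.comp_sub_left s)) h
  rw [integral_add hf (hf.comp_sub_left s), integral_add hg (hg.comp_sub_left s),
    integral_sub_left_eq_self f volume s, integral_sub_left_eq_self g volume s] at hsum
  linarith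

theorem integral_eq_integral_half_add_reflect {f : ℝ → ℝ}
    (hf : ∀ a b, IntervalIntegrable f volume a b) (a b : ℝ) :
    ∫ x in a..b, f x = ∫ x in a..(a + b) / 2, (f x + f (a + b - x)) := by
  have hreflect : ∫ x in a..(a + b) / 2, f (a + b - x) = ∫ x in (a + b) / 2..b, f x := by
    rw [intervalIntegral.integral_comp_sub_left f (a + b)]
    congr 1 <;> ring
  have hf' : IntervalIntegrable (fun x ↦ f (a + b - x)) volume a ((a + b) / 2) := by
    simpa using (hf (a + b - a) (a + b - (a + b) / 2)).comp_sub_left (a + b)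
  rw [intervalIntegral.integral_add (hf _ _) hf', hreflect,
    intervalIntegral.integral_add_adjacent_intervals (hf _ _) (hf _ _)]

theorem integral_eq_two_mul_integral_half_of_symm {f : ℝ → ℝ} {a b : ℝ}
    (hf : ∀ a b, IntervalIntegrable f volume a b) (hsymm : ∀ x, f (a + b - x) = f x) :
    ∫ x in a..b, f x = 2 * ∫ x in a..(a + b) / 2, f x := by
  rw [integral_eq_integral_half_add_reflect hf, ← intervalIntegral.integral_const_mul]
  simp only [hsymm, two_mul]

end Reflection

/-- `f` is symmetric and unimodal about `c`: its values do not increase with the distance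
to `c`. -/
def SymmUnimodal (c : ℝ) (f : ℝ → ℝ) : Prop :=
  ∀ ⦃x x' : ℝ⦄, |x - c| ≤ |x' - c| → f x' ≤ f x

namespace SymmUnimodal

variable {c : ℝ} {f : ℝ → ℝ}

theorem reflect_eq (hf : SymmUnimodal c f) (x : ℝ) : f (2 * c - x) = f x := by
  have habs : |2 * c - x - c| = |x - c| := by
    rw [← abs_neg]
    ring_nf
  exact le_antisymm (hf habs.ge) (hf habs.le)

theorem le_reflect (hf : SymmUnimodal c f) {s x : ℝ} (hs : s ≤ 2 * c) (hx : x ≤ s / 2) :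
    f x ≤ f (s - x) := by
  refine hf ?_
  rw [abs_of_nonpos (a := x - c) (by linarith), abs_le]
  constructor <;> linarith

theorem of_symm_of_antitoneOn (hsymm : ∀ x, f (2 * c - x) = f x)
    (hanti : AntitoneOn f (Set.Ici c)) : SymmUnimodal c f := by
  have hfold (x : ℝ) : f x = f (c + |x - c|) := by
    rcases abs_cases (x - c) with ⟨habs, _⟩ | ⟨habs, _⟩ <;> rw [habs]
    · ring_nf
    · rw [← hsymm x]
      ring_nf
  intro x x' hx
  rw [hfold x, hfold x']
  exact hanti (by simp) (by simp) (by linarith)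

theorem integral_sliding_window (hf : SymmUnimodal c f) (hcont : Continuous f) {l : ℝ}
    (hl : 0 ≤ l) : SymmUnimodal (c + l / 2) fun x ↦ ∫ u in x - l..x, f u := by
  have hint (a b : ℝ) : IntervalIntegrable f volume a b := hcont.intervalIntegrable a b
  refine of_symm_of_antitoneOn (fun x ↦ ?_) fun x hx x' _ hxx' ↦ ?_
  · have hsub := intervalIntegral.integral_comp_sub_left f (2 * c) (a := x - l) (b := x)
    simp only [hf.reflect_eq] at hsub
    rw [hsub]
    congr 1 <;> ring
  · have hshift : ∫ u in x..x', f u ≤ ∫ u in x - l..x' - l, f u := by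
      rw [← intervalIntegral.integral_comp_sub_right f]
      refine intervalIntegral.integral_mono_on hxx' (hint _ _)
        (Continuous.intervalIntegrable (by fun_prop) _ _) fun u hu ↦ hf ?_
      have hxu : c + l / 2 ≤ u := hx.trans hu.1
      rw [abs_of_nonneg (a := u - c) (by linarith), abs_le]
      constructor <;> linarith
    have hleft := intervalIntegral.integral_add_adjacent_intervals
      (hint (x - l) (x' - l)) (hint (x' - l) x')
    have hright := intervalIntegral.integral_add_adjacent_intervals
      (hint (x - l) x) (hint x x')
    linarith

end SymmUnimodal

/-- The common mass `∫ min (f, g)` of two densities on the line. For probability densities it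
is one minus the total variation distance. -/
noncomputable def overlap (f g : ℝ → ℝ) : ℝ :=
  ∫ x, min (f x) (g x)

section Overlap

variable {f g : ℝ → ℝ}

theorem integral_abs_sub_eq_sub_overlap (hf : Integrable f) (hg : Integrable g) :
    ∫ x, |f x - g x| = (∫ x, f x) + (∫ x, g x) - 2 * overlap f g := by
  have habs (x : ℝ) : |f x - g x| = f x + g x - 2 * min (f x) (g x) := by
    linarith [max_sub_min_eq_abs' (f x) (g x), min_add_max (f x) (g x)]
  have hadd : Integrable fun x ↦ f x + g x := hf.add hg
  have hmin : Integrable fun x ↦ min (f x) (g x) := hf.inf hg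
  simp only [habs, overlap]
  rw [integral_sub hadd (hmin.const_mul 2), integral_add hf hg, integral_const_mul]

theorem min_add_min_le_min_add_min {a b p q : ℝ} (hab : a ≤ b) (hpq : p ≤ q) :
    min a q + min b p ≤ min a p + min b q := by
  grind

-- Two-point rearrangement: of each pair `{x, s - x}`, the reflection moves the larger value of
-- `f` onto the point where `g` is larger.
theorem overlap_le_overlap_reflect {c m s : ℝ} (hf : Integrable f) (hg : Integrable g)
    (hfc : SymmUnimodal c f) (hgm : SymmUnimodal m g) (h : |s - c - m| ≤ |c - m|) :
    overlap f g ≤ overlap (fun x ↦ f (s - x)) g := by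
  refine integral_le_integral_of_add_reflect_le (hf.inf hg) ((hf.comp_sub_left s).inf hg) s
    fun x ↦ ?_
  simp only [sub_sub_cancel]
  have hf_le {t : ℝ} (ht : (s - 2 * c) * (2 * t - s) ≤ 0) : f (s - t) ≤ f t :=
    hfc (sq_le_sq.1 (by nlinarith))
  have hg_le {t : ℝ} (ht : 0 ≤ (s - 2 * m) * (2 * t - s)) : g t ≤ g (s - t) :=
    hgm (sq_le_sq.1 (by nlinarith))
  have hsign : (s - 2 * c) * (2 * x - s) * ((s - 2 * m) * (2 * x - s)) ≤ 0 := by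
    have hcm : (s - 2 * c) * (s - 2 * m) ≤ 0 := by nlinarith [sq_le_sq.2 h]
    nlinarith [mul_nonpos_of_nonpos_of_nonneg hcm (sq_nonneg (2 * x - s))]
  rcases mul_nonpos_iff.1 hsign with ⟨hfx, hgx⟩ | ⟨hfx, hgx⟩
  · have hf' : f x ≤ f (s - x) := by simpa using hf_le (t := s - x) (by linarith)
    have hg' : g (s - x) ≤ g x := by simpa using hg_le (t := s - x) (by linarith)
    linarith [min_add_min_le_min_add_min hf' hg']
  · linarith [min_add_min_le_min_add_min (hf_le hfx) (hg_le hgx)]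

end Overlap

section TriDens

variable {y z : ℝ}

theorem triDens_comm (y z : ℝ) : triDens y z = triDens z y := by
  ext x
  rw [triDens, triDens, abs_sub_comm, add_comm]

theorem triDens_const_sub (y z c x : ℝ) : triDens y z (c - x) = triDens (c - y) (c - z) x := by
  rw [triDens, triDens, abs_sub_comm y z, abs_sub_comm (c - x), sub_sub_sub_cancel_left]
  ring_nf

theorem triDens_zero_width_sub (w x : ℝ) : triDens 0 w (w - x) = triDens 0 w x := by
  rw [triDens_const_sub, sub_zero, sub_self, triDens_comm]

theorem triDens_add_right (y z c x : ℝ) : triDens (y + c) (z + c) x = triDens y z (x - c) := by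
  rw [triDens, triDens, add_sub_add_right_eq_sub]
  ring_nf

theorem triDens_nonneg (y z x : ℝ) : 0 ≤ triDens y z x := by
  rw [triDens]
  positivity

theorem triDens_le (y z x : ℝ) : triDens y z x ≤ 2 / |y - z| := by
  refine mul_le_of_le_one_right (by positivity) (max_le zero_le_one ?_)
  exact sub_le_self 1 (by positivity)

theorem continuous_triDens (y z : ℝ) : Continuous (triDens y z) := by
  unfold triDens
  fun_prop

theorem symmUnimodal_triDens (y z : ℝ) : SymmUnimodal ((y + z) / 2) (triDens y z) := by
  intro x x' hx
  unfold triDens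
  gcongr

theorem triDens_eq_max_min (hyz : y < z) (x : ℝ) :
    triDens y z x = 4 / (z - y) ^ 2 * max 0 (min (x - y) (z - x)) := by
  have hw : 0 < z - y := sub_pos.2 hyz
  have hmin : min (x - y) (z - x) = (z - y) / 2 - |x - (y + z) / 2| := by
    grind
  have hscale : 1 - 2 / (z - y) * |x - (y + z) / 2| = 2 / (z - y) * min (x - y) (z - x) := by
    rw [hmin]
    field_simp
  rw [triDens, abs_sub_comm, abs_of_pos hw, hscale]
  nth_rw 1 [← mul_zero (2 / (z - y))]
  rw [← mul_max_of_nonneg _ _ (by positivity)]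
  field_simp
  ring

theorem triDens_of_mem_left_half (hyz : y < z) {x : ℝ} (hyx : y ≤ x) (hx : x ≤ (y + z) / 2) :
    triDens y z x = 4 * (x - y) / (z - y) ^ 2 := by
  rw [triDens_eq_max_min hyz, min_eq_left (by linarith), max_eq_right (by linarith)]
  ring

theorem triDens_of_mem_right_half (hyz : y < z) {x : ℝ} (hx : (y + z) / 2 ≤ x) (hxz : x ≤ z) :
    triDens y z x = 4 * (z - x) / (z - y) ^ 2 := by
  rw [triDens_eq_max_min hyz, min_eq_right (by linarith), max_eq_right (by linarith)]
  ring

theorem triDens_le_of_le (hyz : y < z) {x : ℝ} (hyx : y ≤ x) :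
    triDens y z x ≤ 4 / (z - y) ^ 2 * (x - y) := by
  rw [triDens_eq_max_min hyz]
  gcongr
  exact max_le (sub_nonneg.2 hyx) (min_le_left _ _)

theorem triDens_eq_zero_of_notMem_Ioo (hyz : y ≤ z) {x : ℝ} (hx : x ∉ Set.Ioo y z) :
    triDens y z x = 0 := by
  rcases hyz.eq_or_lt with rfl | hyz
  · simp [triDens]
  rw [triDens_eq_max_min hyz, max_eq_left, mul_zero]
  grind

theorem integrable_triDens (hyz : y ≤ z) : Integrable (triDens y z) :=
  (continuous_triDens y z).integrable_of_hasCompactSupport <|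
    HasCompactSupport.of_support_subset_isCompact isCompact_Icc fun _ hx ↦
      Set.Ioo_subset_Icc_self (by_contra fun h ↦ hx (triDens_eq_zero_of_notMem_Ioo hyz h))

theorem integral_triDens_left_part (hyz : y < z) {a : ℝ} (hya : y ≤ a) (ha : a ≤ (y + z) / 2) :
    ∫ x in y..a, triDens y z x = 2 * ((a - y) / (z - y)) ^ 2 := by
  have hcongr : ∫ x in y..a, triDens y z x = ∫ x in y..a, 4 / (z - y) ^ 2 * (x - y) := by
    refine intervalIntegral.integral_congr fun x hx ↦ ?_
    rw [Set.uIcc_of_le hya] at hx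
    rw [triDens_of_mem_left_half hyz hx.1 (hx.2.trans ha)]
    ring
  rw [hcongr, intervalIntegral.integral_const_mul,
    intervalIntegral.integral_comp_sub_right (fun x ↦ x), integral_id]
  field_simp
  ring

theorem integral_triDens (hyz : y < z) : ∫ x, triDens y z x = 1 := by
  have hsupport : Function.support (triDens y z) ⊆ Set.Ioc y z := fun _ hx ↦
    Set.Ioo_subset_Ioc_self
      (by_contra fun h ↦ hx (triDens_eq_zero_of_notMem_Ioo hyz.le h))
  have hsymm (x : ℝ) : triDens y z (y + z - x) = triDens y z x := by
    rw [triDens_const_sub, add_sub_cancel_left, add_sub_cancel_right, triDens_comm]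
  have hw : z - y ≠ 0 := (sub_pos.2 hyz).ne'
  rw [← intervalIntegral.integral_eq_integral_of_support_subset hsupport,
    integral_eq_two_mul_integral_half_of_symm (continuous_triDens y z).intervalIntegrable hsymm,
    integral_triDens_left_part hyz (by linarith) le_rfl]
  field_simp
  ring

end TriDens

section Region

/-- The half of `restrictedRegion γ` in which the second endpoint is the larger one. -/
def upperRegion (γ : ℝ) : Set (ℝ × ℝ) :=
  {p | 0 ≤ p.1 ∧ p.1 + γ ≤ p.2 ∧ p.2 ≤ 1}

variable {γ : ℝ} {G : ℝ × ℝ → ℝ}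

theorem isCompact_restrictedRegion (γ : ℝ) : IsCompact (restrictedRegion γ) := by
  have hregion : restrictedRegion γ =
      Set.Icc (0 : ℝ) 1 ×ˢ Set.Icc (0 : ℝ) 1 ∩ {p | γ ≤ |p.1 - p.2|} := by
    ext p
    simp only [restrictedRegion, Set.mem_ofPred_eq, Set.mem_inter_iff, Set.mem_prod, and_assoc]
  rw [hregion]
  exact (isCompact_Icc.prod isCompact_Icc).inter_right (isClosed_le (by fun_prop) (by fun_prop))

theorem measurableSet_restrictedRegion (γ : ℝ) : MeasurableSet (restrictedRegion γ) :=
  (isCompact_restrictedRegion γ).measurableSet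

theorem measurableSet_upperRegion (γ : ℝ) : MeasurableSet (upperRegion γ) := by
  refine IsClosed.measurableSet (IsClosed.and ?_ (IsClosed.and ?_ ?_)) <;>
    exact isClosed_le (by fun_prop) (by fun_prop)

theorem restrictedRegion_eq_union_swap (hγ : 0 ≤ γ) :
    restrictedRegion γ = upperRegion γ ∪ Prod.swap ⁻¹' upperRegion γ := by
  ext ⟨y, z⟩
  simp only [restrictedRegion, upperRegion, Set.mem_ofPred_eq, Set.mem_union, Set.mem_preimage,
    Set.mem_Icc, Prod.swap_prod_mk, le_abs]
  grind

theorem disjoint_upperRegion_swap (hγ : 0 < γ) :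
    Disjoint (upperRegion γ) (Prod.swap ⁻¹' upperRegion γ) := by
  rw [Set.disjoint_left]
  rintro ⟨y, z⟩ ⟨-, hyz, -⟩ ⟨-, hzy, -⟩
  dsimp at hyz hzy
  linarith

theorem setIntegral_restrictedRegion_of_symm (hγ : 0 < γ) (hsymm : ∀ p, G p.swap = G p)
    (hG : IntegrableOn G (restrictedRegion γ)) :
    ∫ p in restrictedRegion γ, G p = 2 * ∫ p in upperRegion γ, G p := by
  rw [restrictedRegion_eq_union_swap hγ.le] at hG ⊢
  have hswap : ∫ p in Prod.swap ⁻¹' upperRegion γ, G p = ∫ p in upperRegion γ, G p := by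
    have hpreimage := Measure.measurePreserving_swap.setIntegral_preimage_emb
      (μ := volume) (ν := volume) MeasurableEquiv.prodComm.measurableEmbedding G (upperRegion γ)
    simp only [hsymm] at hpreimage
    exact hpreimage
  rw [setIntegral_union (disjoint_upperRegion_swap hγ)
    (measurable_swap (measurableSet_upperRegion γ)) hG.left_of_union hG.right_of_union, hswap,
    two_mul]

theorem integral_indicator_upperRegion_shear (γ w : ℝ) (G : ℝ × ℝ → ℝ) :
    ∫ y, (upperRegion γ).indicator G (y, y + w) =
      (Set.Icc γ 1).indicator (fun w ↦ ∫ y in (0 : ℝ)..1 - w, G (y, y + w)) w := by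
  have hmem (y : ℝ) : (y, y + w) ∈ upperRegion γ ↔ w ∈ Set.Icc γ 1 ∧ y ∈ Set.Icc 0 (1 - w) := by
    simp only [upperRegion, Set.mem_ofPred_eq, Set.mem_Icc]
    grind
  by_cases hw : w ∈ Set.Icc γ 1
  · rw [Set.indicator_of_mem hw, intervalIntegral.integral_of_le (by linarith [hw.2]),
      ← integral_Icc_eq_integral_Ioc, ← integral_indicator measurableSet_Icc]
    congr 1 with y
    by_cases hy : y ∈ Set.Icc 0 (1 - w)
    · rw [Set.indicator_of_mem ((hmem y).2 ⟨hw, hy⟩), Set.indicator_of_mem hy]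
    · rw [Set.indicator_of_notMem fun h ↦ hy ((hmem y).1 h).2, Set.indicator_of_notMem hy]
  · simp [hmem, hw]

theorem integrable_indicator_upperRegion_shear (hG : IntegrableOn G (upperRegion γ)) :
    Integrable fun p : ℝ × ℝ ↦ (upperRegion γ).indicator G (p.1, p.1 + p.2) :=
  (measurePreserving_prod_add volume volume).integrable_comp_of_integrable
    (hG.integrable_indicator (measurableSet_upperRegion γ))

theorem intervalIntegrable_integral_slice (hγ : γ ≤ 1) (hG : IntegrableOn G (upperRegion γ)) :
    IntervalIntegrable (fun w ↦ ∫ y in (0 : ℝ)..1 - w, G (y, y + w)) volume γ 1 := by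
  rw [intervalIntegrable_iff_integrableOn_Icc_of_le hγ,
    ← integrable_indicator_iff measurableSet_Icc]
  have hslices := (integrable_indicator_upperRegion_shear hG).integral_prod_right
  simpa only [integral_indicator_upperRegion_shear] using hslices

theorem setIntegral_upperRegion (hγ : γ ≤ 1) (hG : IntegrableOn G (upperRegion γ)) :
    ∫ p in upperRegion γ, G p = ∫ w in γ..1, ∫ y in (0 : ℝ)..1 - w, G (y, y + w) := by
  calc
    ∫ p in upperRegion γ, G p = ∫ p, (upperRegion γ).indicator G p :=
      (integral_indicator (measurableSet_upperRegion γ)).symm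
    _ = ∫ p : ℝ × ℝ, (upperRegion γ).indicator G (p.1, p.1 + p.2) :=
      ((measurePreserving_prod_add volume volume).integral_comp
        (MeasurableEquiv.shearAddRight ℝ).measurableEmbedding _).symm
    _ = ∫ w, ∫ y, (upperRegion γ).indicator G (y, y + w) :=
      integral_prod_symm _ (integrable_indicator_upperRegion_shear hG)
    _ = ∫ w in γ..1, ∫ y in (0 : ℝ)..1 - w, G (y, y + w) := by
      simp only [integral_indicator_upperRegion_shear]
      rw [integral_indicator measurableSet_Icc, integral_Icc_eq_integral_Ioc,
        intervalIntegral.integral_of_le hγ]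

theorem volume_real_restrictedRegion (hγ : 0 < γ) (hγ1 : γ ≤ 1) :
    volume.real (restrictedRegion γ) = (1 - γ) ^ 2 := by
  have hone : IntegrableOn (fun _ ↦ (1 : ℝ)) (restrictedRegion γ) :=
    integrableOn_const (isCompact_restrictedRegion γ).measure_ne_top
  have harea : ∫ _ in restrictedRegion γ, (1 : ℝ) = 2 * ∫ w in γ..1, (1 - w) := by
    rw [setIntegral_restrictedRegion_of_symm hγ (fun _ ↦ rfl) hone, setIntegral_upperRegion hγ1
      (hone.mono_set (restrictedRegion_eq_union_swap hγ.le ▸ Set.subset_union_left))]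
    simp
  rw [setIntegral_const, smul_eq_mul, mul_one] at harea
  rw [harea, intervalIntegral.integral_comp_sub_left (fun w ↦ w) 1, integral_id]
  ring

end Region

section PhiGamma

variable {γ x : ℝ}

theorem measurable_triDens : Measurable fun q : ℝ × ℝ × ℝ ↦ triDens q.2.1 q.2.2 q.1 := by
  unfold triDens
  fun_prop

theorem triDens_eq_zero_of_mem_restrictedRegion {p : ℝ × ℝ} (hp : p ∈ restrictedRegion γ)
    (hx : x ∉ Set.Ioo (0 : ℝ) 1) : triDens p.1 p.2 x = 0 := by
  obtain ⟨⟨hy0, hy1⟩, ⟨hz0, hz1⟩, -⟩ := hp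
  rcases le_total p.1 p.2 with h | h
  · exact triDens_eq_zero_of_notMem_Ioo h fun hx' ↦ hx (Set.Ioo_subset_Ioo hy0 hz1 hx')
  · rw [triDens_comm]
    exact triDens_eq_zero_of_notMem_Ioo h fun hx' ↦ hx (Set.Ioo_subset_Ioo hz0 hy1 hx')

theorem integrable_triDens_and_integral_eq_one {y z : ℝ} (hyz : y ≠ z) :
    Integrable (triDens y z) ∧ ∫ x, triDens y z x = 1 := by
  rcases hyz.lt_or_gt with h | h
  · exact ⟨integrable_triDens h.le, integral_triDens h⟩
  · rw [triDens_comm]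
    exact ⟨integrable_triDens h.le, integral_triDens h⟩

theorem ne_of_mem_restrictedRegion (hγ : 0 < γ) {p : ℝ × ℝ} (hp : p ∈ restrictedRegion γ) :
    p.1 ≠ p.2 :=
  sub_ne_zero.1 (abs_pos.1 (hγ.trans_le hp.2.2))

theorem integrableOn_triDens (hγ : 0 < γ) (x : ℝ) :
    IntegrableOn (fun p : ℝ × ℝ ↦ triDens p.1 p.2 x) (restrictedRegion γ) := by
  refine Measure.integrableOn_of_bounded (M := 2 / γ)
    (isCompact_restrictedRegion γ).measure_ne_top
    (measurable_triDens.comp measurable_prodMk_left).aestronglyMeasurable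
    ((ae_restrict_iff' (measurableSet_restrictedRegion γ)).2 (.of_forall fun p hp ↦ ?_))
  rw [norm_of_nonneg (triDens_nonneg _ _ _)]
  refine (triDens_le _ _ _).trans ?_
  have := hp.2.2
  gcongr

theorem integrable_triDens_prod (hγ : 0 < γ) :
    Integrable (fun q : ℝ × ℝ × ℝ ↦ triDens q.2.1 q.2.2 q.1)
      (volume.prod (volume.restrict (restrictedRegion γ))) := by
  have : IsFiniteMeasure (volume.restrict (restrictedRegion γ)) :=
    isFiniteMeasure_restrict.2 (isCompact_restrictedRegion γ).measure_ne_top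
  have hae {P : ℝ × ℝ → Prop} (hP : ∀ p ∈ restrictedRegion γ, P p) :
      ∀ᵐ p ∂volume.restrict (restrictedRegion γ), P p :=
    (ae_restrict_iff' (measurableSet_restrictedRegion γ)).2 (.of_forall hP)
  refine (integrable_prod_iff' measurable_triDens.aestronglyMeasurable).2 ⟨?_, ?_⟩
  · exact hae fun p hp ↦
      (integrable_triDens_and_integral_eq_one (ne_of_mem_restrictedRegion hγ hp)).1
  · refine (integrable_const (1 : ℝ)).congr (hae fun p hp ↦ ?_)
    simp only [norm_of_nonneg (triDens_nonneg _ _ _),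
      (integrable_triDens_and_integral_eq_one (ne_of_mem_restrictedRegion hγ hp)).2]

theorem phiGamma_nonneg (γ x : ℝ) : 0 ≤ phiGamma γ x :=
  mul_nonneg (by positivity) (integral_nonneg fun _ ↦ triDens_nonneg _ _ _)

theorem phiGamma_eq_zero_of_notMem_Ioo (hx : x ∉ Set.Ioo (0 : ℝ) 1) : phiGamma γ x = 0 := by
  rw [phiGamma, setIntegral_eq_zero_of_forall_eq_zero fun p hp ↦
    triDens_eq_zero_of_mem_restrictedRegion hp hx, mul_zero]

theorem integrable_phiGamma (hγ : 0 < γ) : Integrable (phiGamma γ) :=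
  (integrable_triDens_prod hγ).integral_prod_left.const_mul _

theorem integral_phiGamma (hγ : 0 < γ) (hγ1 : γ < 1) : ∫ x, phiGamma γ x = 1 := by
  have hmass : ∫ p in restrictedRegion γ, ∫ x, triDens p.1 p.2 x = (1 - γ) ^ 2 := by
    rw [setIntegral_congr_fun (measurableSet_restrictedRegion γ) fun p hp ↦
      (integrable_triDens_and_integral_eq_one (ne_of_mem_restrictedRegion hγ hp)).2,
      setIntegral_const, smul_eq_mul, mul_one, volume_real_restrictedRegion hγ hγ1.le]
  have hne : (1 - γ) ^ 2 ≠ 0 := pow_ne_zero 2 (sub_pos.2 hγ1).ne'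
  simp only [phiGamma]
  rw [integral_const_mul, integral_integral_swap (integrable_triDens_prod hγ), hmass,
    inv_mul_cancel₀ hne]

end PhiGamma

/-- The total density at `x` of the triangular distributions of width `w` contained in `[0, 1]`,
parametrised by their left endpoint; `φ_γ` averages it over the widths `w ∈ [γ, 1]`. -/
noncomputable def widthSlice (w x : ℝ) : ℝ :=
  ∫ y in (0 : ℝ)..1 - w, triDens y (y + w) x

section WidthSlice

variable {γ w x : ℝ}

theorem triDens_eq_triDens_zero (y w x : ℝ) : triDens y (y + w) x = triDens 0 w (x - y) := by
  simpa [add_comm w y] using triDens_add_right 0 w y x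

theorem widthSlice_eq_integral_window (w x : ℝ) :
    widthSlice w x = ∫ u in x - (1 - w)..x, triDens 0 w u := by
  simp only [widthSlice, triDens_eq_triDens_zero]
  rw [intervalIntegral.integral_comp_sub_left (triDens 0 w), sub_zero]

theorem symmUnimodal_widthSlice (hw : w ≤ 1) : SymmUnimodal (1 / 2) (widthSlice w) := by
  have hwindow := (symmUnimodal_triDens 0 w).integral_sliding_window (continuous_triDens 0 w)
    (sub_nonneg.2 hw)
  rwa [show (0 + w) / 2 + (1 - w) / 2 = 1 / 2 by ring,
    ← funext (widthSlice_eq_integral_window w)] at hwindow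

theorem intervalIntegrable_widthSlice (hγ : 0 < γ) (hγ1 : γ ≤ 1) (x : ℝ) :
    IntervalIntegrable (fun w ↦ widthSlice w x) volume γ 1 :=
  intervalIntegrable_integral_slice hγ1 <| (integrableOn_triDens hγ x).mono_set <|
    restrictedRegion_eq_union_swap hγ.le ▸ Set.subset_union_left

theorem phiGamma_eq_integral_widthSlice (hγ : 0 < γ) (hγ1 : γ ≤ 1) (x : ℝ) :
    phiGamma γ x = 2 / (1 - γ) ^ 2 * ∫ w in γ..1, widthSlice w x := by
  have hint := integrableOn_triDens hγ x
  rw [phiGamma, setIntegral_restrictedRegion_of_symm hγ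
    (fun p ↦ congrFun (triDens_comm p.2 p.1) x) hint, setIntegral_upperRegion hγ1
    (hint.mono_set (restrictedRegion_eq_union_swap hγ.le ▸ Set.subset_union_left))]
  simp only [widthSlice]
  ring

theorem symmUnimodal_phiGamma (hγ : 0 < γ) (hγ1 : γ ≤ 1) : SymmUnimodal (1 / 2) (phiGamma γ) := by
  intro x x' hx
  rw [phiGamma_eq_integral_widthSlice hγ hγ1, phiGamma_eq_integral_widthSlice hγ hγ1]
  gcongr
  exact intervalIntegral.integral_mono_on hγ1 (intervalIntegrable_widthSlice hγ hγ1 x')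
    (intervalIntegrable_widthSlice hγ hγ1 x) fun w hw ↦ symmUnimodal_widthSlice hw.2 hx

theorem phiGamma_le_of_widthSlice_le (hγ : 0 < γ) (hγ1 : γ ≤ 1) {h : ℝ → ℝ}
    (hint : IntervalIntegrable h volume γ 1) (hle : ∀ w ∈ Set.Icc γ 1, widthSlice w x ≤ h w) :
    phiGamma γ x ≤ 2 / (1 - γ) ^ 2 * ∫ w in γ..1, h w := by
  rw [phiGamma_eq_integral_widthSlice hγ hγ1]
  gcongr
  exact intervalIntegral.integral_mono_on hγ1 (intervalIntegrable_widthSlice hγ hγ1 x) hint hle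

theorem widthSlice_le_quadratic (hw : 0 < w) (hx : 0 ≤ x) :
    widthSlice w x ≤ 2 * x ^ 2 * (w ^ 2)⁻¹ := by
  have hint (a b : ℝ) : IntervalIntegrable (triDens 0 w) volume a b :=
    (continuous_triDens 0 w).intervalIntegrable a b
  have hstart : ∫ u in x - (1 - w)..x, triDens 0 w u ≤ ∫ u in (0 : ℝ)..x, triDens 0 w u := by
    have hsplit := intervalIntegral.integral_add_adjacent_intervals
      (hint 0 (x - (1 - w))) (hint (x - (1 - w)) x)
    suffices 0 ≤ ∫ u in (0 : ℝ)..x - (1 - w), triDens 0 w u by linarith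
    rcases le_total 0 (x - (1 - w)) with ha | ha
    · exact intervalIntegral.integral_nonneg ha fun u _ ↦ triDens_nonneg 0 w u
    · rw [intervalIntegral.integral_zero_ae (.of_forall fun u hu ↦ ?_)]
      rw [Set.uIoc_of_ge ha] at hu
      exact triDens_eq_zero_of_notMem_Ioo hw.le fun hu' ↦ hu'.1.not_ge hu.2
  calc
    widthSlice w x ≤ ∫ u in (0 : ℝ)..x, triDens 0 w u :=
      (widthSlice_eq_integral_window w x).trans_le hstart
    _ ≤ ∫ u in (0 : ℝ)..x, 4 / w ^ 2 * u :=
      intervalIntegral.integral_mono_on hx (hint _ _)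
        (Continuous.intervalIntegrable (by fun_prop) _ _)
        fun u hu ↦ by simpa using triDens_le_of_le hw hu.1
    _ = 2 * x ^ 2 * (w ^ 2)⁻¹ := by
      rw [intervalIntegral.integral_const_mul, integral_id]
      ring

theorem phiGamma_le_quadratic (hγ : 0 < γ) (hγ1 : γ < 1) (hx : 0 ≤ x) :
    phiGamma γ x ≤ 4 * x ^ 2 / (γ * (1 - γ)) := by
  have hγ' : 0 < 1 - γ := sub_pos.2 hγ1
  have hzero : (0 : ℝ) ∉ Set.uIcc γ 1 := Set.notMem_uIcc_of_lt hγ one_pos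
  have hint : IntervalIntegrable (fun w : ℝ ↦ 2 * x ^ 2 * w ^ (-2 : ℤ)) volume γ 1 :=
    (intervalIntegral.intervalIntegrable_zpow (.inr hzero)).const_mul _
  have hle (w : ℝ) (hw : w ∈ Set.Icc γ 1) : widthSlice w x ≤ 2 * x ^ 2 * w ^ (-2 : ℤ) :=
    widthSlice_le_quadratic (hγ.trans_le hw.1) hx
  refine (phiGamma_le_of_widthSlice_le hγ hγ1.le hint hle).trans_eq ?_
  rw [intervalIntegral.integral_const_mul, integral_zpow (.inr ⟨by norm_num, hzero⟩)]
  norm_num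
  field_simp
  ring

theorem widthSlice_le_linear (hw : 1 / 2 ≤ w) (hw1 : w ≤ 1) (hx : 0 ≤ x) (hx1 : x ≤ 1 / 2) :
    widthSlice w x ≤ 4 * x * ((1 - w) / w) := by
  have hw0 : 0 < w := by linarith
  have hpointwise (y : ℝ) (hy : y ∈ Set.Icc 0 (1 - w)) :
      triDens y (y + w) x ≤ 4 / w ^ 2 * x * (1 - 2 * y) := by
    have hy1 : 2 * y ≤ 1 := by linarith [hy.2]
    rw [triDens_eq_max_min (by linarith), add_sub_cancel_left, mul_assoc]
    gcongr
    refine max_le (mul_nonneg hx (by linarith)) ((min_le_left _ _).trans ?_)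
    nlinarith [hy.1]
  calc
    widthSlice w x ≤ ∫ y in (0 : ℝ)..1 - w, 4 / w ^ 2 * x * (1 - 2 * y) := by
      refine intervalIntegral.integral_mono_on (sub_nonneg.2 hw1) ?_
        (Continuous.intervalIntegrable (by fun_prop) _ _) hpointwise
      simp only [triDens_eq_triDens_zero]
      exact ((continuous_triDens 0 w).comp (by fun_prop)).intervalIntegrable _ _
    _ = 4 * x * ((1 - w) / w) := by
      rw [intervalIntegral.integral_const_mul, intervalIntegral.integral_sub (by simp)
        (Continuous.intervalIntegrable (by fun_prop) _ _), intervalIntegral.integral_const_mul,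
        integral_id, intervalIntegral.integral_const, smul_eq_mul]
      field_simp
      ring

theorem phiGamma_le_linear (hγ : 1 / 2 ≤ γ) (hγ1 : γ < 1) (hx : 0 ≤ x) (hx1 : x ≤ 1 / 2) :
    phiGamma γ x ≤ 4 * ((γ + 2) / (3 * γ)) * x := by
  have hγ0 : 0 < γ := by linarith
  have hγ' : 0 < 1 - γ := sub_pos.2 hγ1
  have hle (w : ℝ) (hw : w ∈ Set.Icc γ 1) :
      widthSlice w x ≤ 4 * x * ((1 - w) + (1 - w) ^ 2 / γ) := by
    refine (widthSlice_le_linear (hγ.trans hw.1) hw.2 hx hx1).trans ?_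
    gcongr
    have hw0 : 0 < w := hγ0.trans_le hw.1
    calc
      (1 - w) / w = (1 - w) + (1 - w) ^ 2 / w := by
        field_simp
        ring
      _ ≤ (1 - w) + (1 - w) ^ 2 / γ := by
        gcongr
        exact hw.1
  refine (phiGamma_le_of_widthSlice_le hγ0 hγ1.le
    (Continuous.intervalIntegrable (by fun_prop) _ _) hle).trans_eq ?_
  have hreflect := intervalIntegral.integral_comp_sub_left (fun u : ℝ ↦ u + u ^ 2 / γ) 1
    (a := γ) (b := 1)
  rw [intervalIntegral.integral_const_mul, hreflect, intervalIntegral.integral_add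
    (Continuous.intervalIntegrable (by fun_prop) _ _)
    (Continuous.intervalIntegrable (by fun_prop) _ _), intervalIntegral.integral_div,
    integral_id, integral_pow]
  norm_num
  field_simp
  ring

end WidthSlice

section WidthComparison

variable {γ w : ℝ}

theorem triDens_zero_le_triDens_zero_of_half_le (hγ : 0 < γ) (hγw : γ ≤ w) {x : ℝ}
    (hx : w / 2 ≤ x) : triDens 0 γ x ≤ triDens 0 w x := by
  have hw : 0 < w := hγ.trans_le hγw
  rcases lt_or_ge x γ with hxγ | hγx
  · rw [triDens_of_mem_right_half hγ (by linarith) hxγ.le,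
      triDens_of_mem_right_half hw (by linarith) (by linarith), sub_zero, sub_zero,
      div_le_div_iff₀ (by positivity) (by positivity)]
    have hprod : 0 ≤ (w - γ) * ((γ + w) * x - γ * w) :=
      mul_nonneg (sub_nonneg.2 hγw) (by nlinarith)
    linarith
  · rw [triDens_eq_zero_of_notMem_Ioo hγ.le fun h ↦ h.2.not_ge hγx]
    exact triDens_nonneg 0 w x

theorem overlap_triDens_zero_le_of_pairing {g : ℝ → ℝ} {c : ℝ} (hγ : 0 < γ) (hγw : γ ≤ w)
    (hwc : w ≤ 2 * c) (hg : Integrable g) (hgm : SymmUnimodal c g)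
    (hpair : ∀ x, 0 ≤ x → x ≤ w / 2 → triDens 0 w x < g x →
      min (triDens 0 γ x) (g x) + triDens 0 γ (w - x) ≤ 2 * triDens 0 w x) :
    overlap (triDens 0 γ) g ≤ overlap (triDens 0 w) g := by
  have hw : 0 < w := hγ.trans_le hγw
  refine integral_le_integral_of_add_reflect_le ((integrable_triDens hγ.le).inf hg)
    ((integrable_triDens hw.le).inf hg) w fun x ↦ ?_
  wlog hx : x ≤ w / 2 generalizing x
  · have hreflected := this (w - x) (by linarith)
    rw [sub_sub_cancel] at hreflected
    linarith
  have hwide := triDens_zero_le_triDens_zero_of_half_le hγ hγw (show w / 2 ≤ w - x by linarith)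
  have hgx : g x ≤ g (w - x) := hgm.le_reflect hwc hx
  rw [triDens_zero_width_sub] at hwide ⊢
  rcases lt_or_ge x 0 with hx0 | hx0
  · have hzero {v : ℝ} (hv : 0 < v) : triDens 0 v x = 0 :=
      triDens_eq_zero_of_notMem_Ioo hv.le fun h ↦ hx0.not_ge h.1.le
    rw [hzero hγ, hzero hw] at *
    gcongr
  rcases lt_or_ge (triDens 0 w x) (g x) with hlt | hge
  · rw [min_eq_left hlt.le, min_eq_left (hlt.le.trans hgx)]
    linarith [hpair x hx0 hx hlt, min_le_left (triDens 0 γ (w - x)) (g (w - x))]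
  · rw [min_eq_right hge]
    gcongr
    exact min_le_right _ _

theorem two_mul_sub_mul_pow_four_le (hγ : 0 ≤ γ) (hγ1 : γ ≤ 1 / 2) (hw : 0 ≤ w) (hw1 : w ≤ 1) :
    (2 * γ - w) * w ^ 4 ≤ γ ^ 3 := by
  have hquartic : (2 * γ - w) * w ^ 3 ≤ 2 * γ ^ 4 := by
    nlinarith [sq_nonneg (w ^ 2 - γ * w - 3 / 4 * γ ^ 2), sq_nonneg (w * γ - 3 / 2 * γ ^ 2),
      sq_nonneg (γ ^ 2)]
  calc
    (2 * γ - w) * w ^ 4 = (2 * γ - w) * w ^ 3 * w := by ring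
    _ ≤ 2 * γ ^ 4 * w := by gcongr
    _ ≤ γ ^ 3 * (2 * γ) * 1 := by
      rw [show 2 * γ ^ 4 = γ ^ 3 * (2 * γ) by ring]
      gcongr
    _ ≤ γ ^ 3 * 1 * 1 := by
      gcongr
      linarith
    _ = γ ^ 3 := by ring

theorem phiGamma_le_of_le_half (hγ : 0 < γ) (hγ1 : γ ≤ 1 / 2) {x : ℝ} (hx : 0 ≤ x) :
    phiGamma γ x ≤ 8 * x ^ 2 / γ := by
  refine (phiGamma_le_quadratic hγ (by linarith) hx).trans ?_
  rw [div_le_div_iff₀ (mul_pos hγ (by linarith)) hγ]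
  nlinarith [mul_nonneg (mul_nonneg (sq_nonneg x) hγ.le) (show 0 ≤ 1 - 2 * γ by linarith)]

theorem triDens_zero_add_triDens_zero_le {x : ℝ} (hγ : 0 < γ) (hγ1 : γ ≤ 1 / 2) (hw : 0 < w)
    (hw1 : w ≤ 1) (hγx : γ / 2 ≤ x) (hxw : x ≤ w / 2) (hwx : w - x ≤ γ)
    (hx : γ ≤ 2 * x * w ^ 2) :
    triDens 0 γ x + triDens 0 γ (w - x) ≤ 2 * (4 * x / w ^ 2) := by
  have hright (t : ℝ) (ht : γ / 2 ≤ t) (htγ : t ≤ γ) : triDens 0 γ t = 4 * (γ - t) / γ ^ 2 := by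
    rw [triDens_of_mem_right_half hγ (by linarith) htγ, sub_zero]
  have hcross : (2 * γ - w) * w ^ 2 ≤ 2 * x * γ ^ 2 := by
    refine le_of_mul_le_mul_right ?_ (show 0 < w ^ 2 by positivity)
    calc
      (2 * γ - w) * w ^ 2 * w ^ 2 = (2 * γ - w) * w ^ 4 := by ring
      _ ≤ γ ^ 2 * γ := by
        linarith [two_mul_sub_mul_pow_four_le hγ.le hγ1 hw.le hw1]
      _ ≤ γ ^ 2 * (2 * x * w ^ 2) := by gcongr
      _ = 2 * x * γ ^ 2 * w ^ 2 := by ring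
  calc
    triDens 0 γ x + triDens 0 γ (w - x) = 4 * (2 * γ - w) / γ ^ 2 := by
      rw [hright x hγx (by linarith), hright (w - x) (by linarith) hwx]
      ring
    _ ≤ 2 * (4 * x / w ^ 2) := by
      rw [← mul_div_assoc, div_le_div_iff₀ (by positivity) (by positivity)]
      linarith

theorem overlap_triDens_zero_le_of_le_half (hγ : 0 < γ) (hγ1 : γ ≤ 1 / 2) (hγw : γ ≤ w)
    (hw1 : w ≤ 1) :
    overlap (triDens 0 γ) (phiGamma γ) ≤ overlap (triDens 0 w) (phiGamma γ) := by
  have hw : 0 < w := hγ.trans_le hγw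
  have hw2 : w ^ 2 ≤ 1 := pow_le_one₀ hw.le hw1
  refine overlap_triDens_zero_le_of_pairing hγ hγw (by linarith) (integrable_phiGamma hγ)
    (symmUnimodal_phiGamma hγ (by linarith)) fun x hx0 hxw hlt ↦ ?_
  rw [triDens_of_mem_left_half hw hx0 (by linarith), sub_zero, sub_zero] at *
  have hφ := phiGamma_le_of_le_half hγ hγ1 hx0
  have hx : γ < 2 * x * w ^ 2 := by
    have hlt' := hlt.trans_le hφ
    rw [div_lt_div_iff₀ (by positivity) hγ] at hlt'
    nlinarith
  rcases le_total γ (w - x) with hγwx | hwxγ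
  · rw [triDens_eq_zero_of_notMem_Ioo hγ.le fun h ↦ h.2.not_ge hγwx, add_zero]
    rcases le_total γ x with hγx | hxγ
    · rw [triDens_eq_zero_of_notMem_Ioo hγ.le fun h ↦ h.2.not_ge hγx]
      exact (min_le_left _ _).trans (by positivity)
    · refine (min_le_right _ _).trans (hφ.trans ?_)
      have hxw2 : x * w ^ 2 ≤ γ := (mul_le_of_le_one_right hx0 hw2).trans hxγ
      rw [← mul_div_assoc, div_le_div_iff₀ hγ (by positivity)]
      linarith [mul_le_mul_of_nonneg_left hxw2 hx0]
  · have hγx : γ / 2 ≤ x := by linarith [mul_le_of_le_one_right hx0 hw2]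
    refine le_trans ?_ (triDens_zero_add_triDens_zero_le hγ hγ1 hw hw1 hγx hxw hwxγ hx.le)
    gcongr
    exact min_le_left _ _

theorem overlap_triDens_zero_eq_integral {g : ℝ → ℝ} (hw : 0 ≤ w) (hg0 : ∀ x, 0 ≤ g x) :
    overlap (triDens 0 w) g = ∫ x in (0 : ℝ)..w, min (triDens 0 w x) (g x) := by
  refine (intervalIntegral.integral_eq_integral_of_support_subset fun x hx ↦ ?_).symm
  refine by_contra fun hxw ↦ hx ?_
  beta_reduce
  rw [triDens_eq_zero_of_notMem_Ioo hw fun h ↦ hxw (Set.Ioo_subset_Ioc_self h),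
    min_eq_left (hg0 x)]

theorem overlap_triDens_zero_le_integral_add {g : ℝ → ℝ} {a : ℝ} (hg : Integrable g)
    (hg0 : ∀ x, 0 ≤ g x) (hγ : 0 < γ) (hγa : γ / 2 ≤ a) (haγ : a ≤ γ) :
    overlap (triDens 0 γ) g ≤ (∫ x in (0 : ℝ)..a, g x) + 2 * (1 - a / γ) ^ 2 := by
  have ha0 : 0 ≤ a := by linarith
  have hT := integrable_triDens hγ.le
  have hmin (s t : ℝ) :
      IntervalIntegrable (fun x ↦ min (triDens 0 γ x) (g x)) volume s t :=
    (hT.inf hg).intervalIntegrable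
  have htail : ∫ x in a..γ, triDens 0 γ x = 2 * (1 - a / γ) ^ 2 := by
    have hreflect := intervalIntegral.integral_comp_sub_left (triDens 0 γ) γ (a := a) (b := γ)
    simp only [triDens_zero_width_sub, sub_self] at hreflect
    rw [hreflect, integral_triDens_left_part hγ (sub_nonneg.2 haγ) (by linarith), sub_zero,
      sub_zero]
    field_simp
  rw [overlap_triDens_zero_eq_integral hγ.le hg0,
    ← intervalIntegral.integral_add_adjacent_intervals (hmin 0 a) (hmin a γ), ← htail]
  gcongr
  · exact intervalIntegral.integral_mono_on ha0 (hmin 0 a) hg.intervalIntegrable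
      fun x _ ↦ min_le_right _ _
  · exact intervalIntegral.integral_mono_on haγ (hmin a γ) hT.intervalIntegrable
      fun x _ ↦ min_le_left _ _

theorem integral_div_le_overlap_triDens_zero {g : ℝ → ℝ} {c μ : ℝ} (hg : Integrable g)
    (hg0 : ∀ x, 0 ≤ g x) (hgm : SymmUnimodal c g)
    (hgμ : ∀ x, 0 ≤ x → x ≤ c → g x ≤ 4 * μ * x) (hw : 0 < w) (hwc : w ≤ 2 * c)
    (hμ : 1 ≤ μ * w ^ 2) :
    2 * (∫ x in (0 : ℝ)..w / 2, g x) / (μ * w ^ 2) ≤ overlap (triDens 0 w) g := by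
  have hmin (s t : ℝ) :
      IntervalIntegrable (fun x ↦ min (triDens 0 w x) (g x)) volume s t :=
    ((integrable_triDens hw.le).inf hg).intervalIntegrable
  have hpointwise (x : ℝ) (hx : x ∈ Set.Icc 0 (w / 2)) :
      2 / (μ * w ^ 2) * g x ≤
        min (triDens 0 w x) (g x) + min (triDens 0 w (w - x)) (g (w - x)) := by
    have hgx : g x ≤ g (w - x) := hgm.le_reflect hwc hx.2
    have hT : g x / (μ * w ^ 2) ≤ triDens 0 w x := by
      rw [triDens_of_mem_left_half hw hx.1 (by linarith [hx.2]), sub_zero, sub_zero,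
        div_le_div_iff₀ (by linarith) (by positivity)]
      nlinarith [mul_le_mul_of_nonneg_right (hgμ x hx.1 (by linarith [hx.2])) (sq_nonneg w)]
    have hle : g x / (μ * w ^ 2) ≤ min (triDens 0 w x) (g x) :=
      le_min hT (div_le_self (hg0 x) hμ)
    have hle' : min (triDens 0 w x) (g x) ≤ min (triDens 0 w (w - x)) (g (w - x)) := by
      rw [triDens_zero_width_sub]
      gcongr
    calc
      2 / (μ * w ^ 2) * g x = g x / (μ * w ^ 2) + g x / (μ * w ^ 2) := by ring
      _ ≤ _ := add_le_add hle (hle.trans hle')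
  rw [overlap_triDens_zero_eq_integral hw.le hg0, integral_eq_integral_half_add_reflect hmin,
    zero_add, mul_div_right_comm, ← intervalIntegral.integral_const_mul]
  refine intervalIntegral.integral_mono_on (by positivity)
    (hg.intervalIntegrable.const_mul _) ((hmin _ _).add ?_) hpointwise
  simpa using (hmin (w - 0) (w - w / 2)).comp_sub_left w

theorem le_integral_phiGamma_half (hγ : 1 / 2 ≤ γ) (hγ1 : γ < 1) (hw : 0 ≤ w) (hw1 : w ≤ 1) :
    1 / 2 - (γ + 2) / (3 * γ) * (1 - w ^ 2) / 2 ≤ ∫ x in (0 : ℝ)..w / 2, phiGamma γ x := by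
  have hγ0 : 0 < γ := by linarith
  have hint (a b : ℝ) : IntervalIntegrable (phiGamma γ) volume a b :=
    (integrable_phiGamma hγ0).intervalIntegrable
  have hhalf : ∫ x in (0 : ℝ)..1 / 2, phiGamma γ x = 1 / 2 := by
    have htotal : ∫ x in (0 : ℝ)..1, phiGamma γ x = 1 := by
      rw [intervalIntegral.integral_eq_integral_of_support_subset fun x hx ↦
        Set.Ioo_subset_Ioc_self (by_contra fun h ↦ hx (phiGamma_eq_zero_of_notMem_Ioo h)),
        integral_phiGamma hγ0 hγ1]
    have hsymm (x : ℝ) : phiGamma γ (0 + 1 - x) = phiGamma γ x := by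
      simpa using (symmUnimodal_phiGamma hγ0 hγ1.le).reflect_eq x
    rw [integral_eq_two_mul_integral_half_of_symm hint hsymm, zero_add] at htotal
    linarith
  have hrest : ∫ x in w / 2..1 / 2, phiGamma γ x ≤ (γ + 2) / (3 * γ) * (1 - w ^ 2) / 2 := by
    calc
      ∫ x in w / 2..1 / 2, phiGamma γ x ≤ ∫ x in w / 2..1 / 2, 4 * ((γ + 2) / (3 * γ)) * x :=
        intervalIntegral.integral_mono_on (by linarith) (hint _ _)
          (Continuous.intervalIntegrable (by fun_prop) _ _)
          fun x hx ↦ phiGamma_le_linear hγ hγ1 (by linarith [hx.1]) hx.2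
      _ = (γ + 2) / (3 * γ) * (1 - w ^ 2) / 2 := by
        rw [intervalIntegral.integral_const_mul, integral_id]
        ring
  have hsplit := intervalIntegral.integral_add_adjacent_intervals (hint 0 (w / 2))
    (hint (w / 2) (1 / 2))
  linarith

theorem half_one_add_le_of_one_le_slope_mul_sq (hγ : 1 / 2 ≤ γ) (hγ1 : γ ≤ 1) (hw : 0 ≤ w)
    (hμ : 1 ≤ (γ + 2) / (3 * γ) * w ^ 2) : (1 + γ) / 2 ≤ w := by
  have hsq : 3 * γ ≤ (γ + 2) * w ^ 2 := by
    rwa [div_mul_eq_mul_div, one_le_div (by linarith)] at hμ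
  have hcubic : (γ + 2) * (1 + γ) ^ 2 ≤ 12 * γ := by
    have hfactor : 0 ≤ (1 - γ) * (γ ^ 2 + 5 * γ - 2) :=
      mul_nonneg (sub_nonneg.2 hγ1) (by nlinarith)
    linarith
  refine le_of_sq_le_sq ?_ hw
  nlinarith

theorem slope_mul_sq_mul_sq_le (hγ : 1 / 2 ≤ γ) (hγ1 : γ ≤ 1) (hw : 0 ≤ w) (hw1 : w ≤ 1)
    (hμ : 1 ≤ (γ + 2) / (3 * γ) * w ^ 2) :
    (γ + 2) / (3 * γ) * w ^ 2 * (2 * γ - w) ^ 2 ≤ (2 - (γ + 2) / (3 * γ)) * γ ^ 2 := by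
  have hγ0 : 0 < γ := by linarith
  have hγw := half_one_add_le_of_one_le_slope_mul_sq hγ hγ1 hw hμ
  have hprod : w * (2 * γ - w) ≤ (1 + γ) * (3 * γ - 1) / 4 := by
    nlinarith [mul_nonneg (sub_nonneg.2 hγw) (show 0 ≤ w - (3 * γ - 1) / 2 by linarith)]
  have hone : (γ + 2) * ((1 + γ) * (3 * γ - 1) / 4) ^ 2 ≤ (5 * γ - 2) * γ ^ 2 := by
    have hquartic : 0 ≤ 9 * γ ^ 4 + γ ^ 2 * (39 * γ - 19) + (5 * γ - 2) := by
      have hcoeff : 0 ≤ 39 * γ - 19 := by linarith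
      have hconst : 0 ≤ 5 * γ - 2 := by linarith
      positivity
    linarith [mul_nonneg (sub_nonneg.2 hγ1) hquartic]
  calc
    (γ + 2) / (3 * γ) * w ^ 2 * (2 * γ - w) ^ 2
      = (γ + 2) * (w * (2 * γ - w)) ^ 2 / (3 * γ) := by ring
    _ ≤ (γ + 2) * ((1 + γ) * (3 * γ - 1) / 4) ^ 2 / (3 * γ) := by
      have hnonneg : 0 ≤ w * (2 * γ - w) := mul_nonneg hw (by linarith)
      gcongr
    _ ≤ (5 * γ - 2) * γ ^ 2 / (3 * γ) := by gcongr
    _ = (2 - (γ + 2) / (3 * γ)) * γ ^ 2 := by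
      field_simp
      ring

theorem add_two_mul_sq_le_two_mul_div {μ m : ℝ} (hγ : 0 < γ) (hμ2 : μ < 2) (hw2 : w ^ 2 ≤ 1)
    (hμ : 1 ≤ μ * w ^ 2) (hm : 1 / 2 - μ * (1 - w ^ 2) / 2 ≤ m)
    (hslope : μ * w ^ 2 * (2 * γ - w) ^ 2 ≤ (2 - μ) * γ ^ 2) :
    m + 2 * (1 - w / 2 / γ) ^ 2 ≤ 2 * m / (μ * w ^ 2) := by
  have hμ0 : 0 < μ := pos_of_mul_pos_left (by linarith) (sq_nonneg w)
  have hsμ : μ * w ^ 2 ≤ μ := mul_le_of_le_one_right hμ0.le hw2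
  set s := μ * w ^ 2
  have hs0 : 0 < s := by linarith
  have hmass : (2 - μ) / 2 ≤ m * (2 - s) := by
    nlinarith [mul_nonneg (sub_nonneg.2 hμ) (sub_nonneg.2 hsμ)]
  have htail : 2 * (1 - w / 2 / γ) ^ 2 * s ≤ (2 - μ) / 2 := by
    calc
      2 * (1 - w / 2 / γ) ^ 2 * s = s * (2 * γ - w) ^ 2 / (2 * γ ^ 2) := by
        field_simp
      _ ≤ (2 - μ) * γ ^ 2 / (2 * γ ^ 2) := by gcongr
      _ = (2 - μ) / 2 := by field_simp
  rw [le_div_iff₀ hs0]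
  linarith

theorem overlap_triDens_zero_le_of_half_le (hγ : 1 / 2 ≤ γ) (hγ1 : γ < 1) (hγw : γ ≤ w)
    (hw1 : w ≤ 1) :
    overlap (triDens 0 γ) (phiGamma γ) ≤ overlap (triDens 0 w) (phiGamma γ) := by
  have hγ0 : 0 < γ := by linarith
  have hw : 0 < w := hγ0.trans_le hγw
  have hφ := integrable_phiGamma hγ0
  have hφm := symmUnimodal_phiGamma hγ0 hγ1.le
  have hφμ (x : ℝ) := phiGamma_le_linear hγ hγ1 (x := x)
  rcases le_total ((γ + 2) / (3 * γ) * w ^ 2) 1 with hμ | hμ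
  · refine overlap_triDens_zero_le_of_pairing hγ0 hγw (by linarith) hφ hφm
      fun x hx0 hxw hlt ↦ absurd hlt (not_lt.2 ((hφμ x hx0 (by linarith)).trans ?_))
    rw [triDens_of_mem_left_half hw hx0 (by linarith), sub_zero, sub_zero,
      le_div_iff₀ (by positivity)]
    linarith [mul_le_mul_of_nonneg_right hμ hx0]
  · have hμ2 : (γ + 2) / (3 * γ) < 2 := by
      rw [div_lt_iff₀ (by positivity)]
      linarith
    calc
      overlap (triDens 0 γ) (phiGamma γ)
        ≤ (∫ x in (0 : ℝ)..w / 2, phiGamma γ x) + 2 * (1 - w / 2 / γ) ^ 2 :=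
          overlap_triDens_zero_le_integral_add hφ (phiGamma_nonneg γ) hγ0 (by linarith)
            (by linarith)
      _ ≤ 2 * (∫ x in (0 : ℝ)..w / 2, phiGamma γ x) / ((γ + 2) / (3 * γ) * w ^ 2) :=
          add_two_mul_sq_le_two_mul_div hγ0 hμ2 (pow_le_one₀ hw.le hw1) hμ
            (le_integral_phiGamma_half hγ hγ1 hw.le hw1)
            (slope_mul_sq_mul_sq_le hγ hγ1.le hw.le hw1 hμ)
      _ ≤ overlap (triDens 0 w) (phiGamma γ) :=
          integral_div_le_overlap_triDens_zero hφ (phiGamma_nonneg γ) hφm hφμ hw (by linarith) hμ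

end WidthComparison

theorem overlap_triDens_zero_le_overlap_triDens {γ y z : ℝ} (hγ : 0 < γ) (hγ1 : γ < 1)
    (hy : 0 ≤ y) (hz : z ≤ 1) (hyz : γ ≤ z - y) :
    overlap (triDens 0 γ) (phiGamma γ) ≤ overlap (triDens y z) (phiGamma γ) := by
  have hwidth : overlap (triDens 0 γ) (phiGamma γ) ≤ overlap (triDens 0 (z - y)) (phiGamma γ) := by
    rcases le_total γ (1 / 2) with hhalf | hhalf
    · exact overlap_triDens_zero_le_of_le_half hγ hhalf hyz (by linarith)
    · exact overlap_triDens_zero_le_of_half_le hhalf hγ1 hyz (by linarith)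
  have hcentre : |z - (0 + (z - y)) / 2 - 1 / 2| ≤ |(0 + (z - y)) / 2 - 1 / 2| := by
    rw [abs_of_nonpos (a := (0 + (z - y)) / 2 - 1 / 2) (by linarith), abs_le]
    constructor <;> linarith
  have hshift := overlap_le_overlap_reflect (integrable_triDens (by linarith))
    (integrable_phiGamma hγ) (symmUnimodal_triDens 0 (z - y)) (symmUnimodal_phiGamma hγ hγ1.le)
    hcentre
  simp only [triDens_const_sub, sub_zero, sub_sub_cancel, triDens_comm z y] at hshift
  exact hwidth.trans hshift

theorem integral_abs_triDens_sub_phiGamma {γ y z : ℝ} (hγ : 0 < γ) (hγ1 : γ < 1)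
    (hyz : (y, z) ∈ restrictedRegion γ) :
    ∫ x in (0 : ℝ)..1, |triDens y z x - phiGamma γ x| =
      2 - 2 * overlap (triDens y z) (phiGamma γ) := by
  have hsupport : Function.support (fun x ↦ |triDens y z x - phiGamma γ x|) ⊆ Set.Ioc 0 1 := by
    refine fun x hx ↦ by_contra fun hx' ↦ hx ?_
    have hx'' : x ∉ Set.Ioo (0 : ℝ) 1 := fun h ↦ hx' (Set.Ioo_subset_Ioc_self h)
    simp [triDens_eq_zero_of_mem_restrictedRegion hyz hx'', phiGamma_eq_zero_of_notMem_Ioo hx'']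
  obtain ⟨hint, hmass⟩ :=
    integrable_triDens_and_integral_eq_one (ne_of_mem_restrictedRegion hγ hyz)
  rw [intervalIntegral.integral_eq_integral_of_support_subset hsupport,
    integral_abs_sub_eq_sub_overlap hint (integrable_phiGamma hγ), hmass,
    integral_phiGamma hγ hγ1]
  norm_num

/-- Among all restricted symmetric triangular distributions with parameter `γ`, the
total variation distance to the intensity measure with density `φ_γ` is maximized by
the triangular distribution supported on `[0,γ]`, i.e. the one with endpoints `(γ,0)`. -/
theorem tv_dist_to_intensity_maximized (γ : ℝ) (hγ : γ ∈ Set.Ioo (0 : ℝ) 1)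
    (y z : ℝ) (hy : y ∈ Set.Icc (0 : ℝ) 1) (hz : z ∈ Set.Icc (0 : ℝ) 1)
    (hyz : γ ≤ |y - z|) :
    (1 / 2) * ∫ x in (0 : ℝ)..1, |triDens y z x - phiGamma γ x| ≤
      (1 / 2) * ∫ x in (0 : ℝ)..1, |triDens γ 0 x - phiGamma γ x| := by
  obtain ⟨hγ0, hγ1⟩ := hγ
  wlog h : y ≤ z generalizing y z
  · rw [triDens_comm y z]
    exact this z y hz hy (by rwa [abs_sub_comm]) (le_of_not_ge h)
  have hextreme : (γ, 0) ∈ restrictedRegion γ :=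
    ⟨⟨hγ0.le, hγ1.le⟩, ⟨le_rfl, zero_le_one⟩, by simp [le_abs_self]⟩
  have hoverlap : overlap (triDens γ 0) (phiGamma γ) ≤ overlap (triDens y z) (phiGamma γ) := by
    rw [abs_sub_comm, abs_of_nonneg (sub_nonneg.2 h)] at hyz
    rw [triDens_comm γ 0]
    exact overlap_triDens_zero_le_overlap_triDens hγ0 hγ1 hy.1 hz.2 hyz
  rw [integral_abs_triDens_sub_phiGamma hγ0 hγ1 ⟨hy, hz, hyz⟩,
    integral_abs_triDens_sub_phiGamma hγ0 hγ1 hextreme]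
  linarith
end

section
/- Fix μ ∈ (0,1/2], ε > 0, m ∈ ℝ, a vertex v ∈ ℤ, and a bounded profile η : ℤ → ℝ such that v is ε-flat to the right: for all n ≥ 0, (1/(n+1))·∑_{u=v}^{v+n} η(u) ∈ [m−ε, m+ε]. Apply any finite sequence of elementary updates, each on some edge ⟨u,u+1⟩ with u ≥ v (so vertex v never interacts with vertex v−1), where an update on ⟨u,u+1⟩ replaces (η(u), η(u+1)) by ((1−μ)η(u)+μη(u+1), μη(u)+(1−μ)η(u+1)). Then after the update sequence, the value at vertex v still lies in [m−ε, m+ε]. -/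
/-- The elementary Deffuant-type `μ`-averaging update on the edge `⟨u, u+1⟩` of `ℤ`
for a real-valued opinion profile. -/
noncomputable def deffUpdate (μ : ℝ) (u : ℤ) (η : ℤ → ℝ) : ℤ → ℝ := fun v =>
  if v = u then (1 - μ) * η u + μ * η (u + 1)
  else if v = u + 1 then μ * η u + (1 - μ) * η (u + 1)
  else η v

/-!
An update on `⟨v + n, v + n + 1⟩` conserves the total opinion, so among the averages over the
intervals `[v, v + k]` it changes only the one with `k = n`. The corresponding partial sum moves
towards the mean of its two neighboring partial sums, so that for `μ ≤ 1 / 2` the new average is a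
convex combination of the old averages for `k = n - 1, n, n + 1`. Hence a convex set that contains
all the averages still contains them after every update, and the average for `k = 0` is the value
at `v`.
-/

open Finset

/-- The average of the profile `η` over the `n + 1` vertices `v, …, v + n`. Flatness to the right
of `v` is a condition on these averages for all `n`. -/
noncomputable def rightAverage (η : ℤ → ℝ) (v : ℤ) (n : ℕ) : ℝ :=
  ((n : ℝ) + 1)⁻¹ * ∑ u ∈ Icc v (v + n), η u

section

variable (μ : ℝ) (η : ℤ → ℝ) (v : ℤ) (n : ℕ)

lemma rightAverage_zero : rightAverage η v 0 = η v := by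
  simp [rightAverage]

lemma add_one_mul_rightAverage :
    ((n : ℝ) + 1) * rightAverage η v n = ∑ u ∈ Icc v (v + n), η u :=
  mul_inv_cancel_left₀ n.cast_add_one_ne_zero _

-- At `n = 0` the truncated index `n - 1` is harmless, since its coefficient vanishes.
lemma add_one_mul_rightAverage_eq_mul_add :
    ((n : ℝ) + 1) * rightAverage η v n = n * rightAverage η v (n - 1) + η (v + n) := by
  cases n with
  | zero => simp [rightAverage_zero]
  | succ n =>
    have hIcc : insert (v + n + 1) (Icc v (v + n)) = Icc v (v + n + 1) :=
      insert_Icc_right_eq_Icc_add_one (by lia)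
    rw [add_one_mul_rightAverage, Nat.add_sub_cancel, Nat.cast_add_one, Nat.cast_add_one,
      add_one_mul_rightAverage, ← add_assoc, ← hIcc, sum_insert (by simp), add_comm]

lemma deffUpdate_apply (u w : ℤ) :
    deffUpdate μ u η w = η w + (if u = w then μ * (η (u + 1) - η u) else 0) -
      (if u + 1 = w then μ * (η (u + 1) - η u) else 0) := by
  unfold deffUpdate
  split_ifs <;> first | lia | (subst_vars; ring)

lemma sum_deffUpdate (u : ℤ) (s : Finset ℤ) :
    ∑ w ∈ s, deffUpdate μ u η w =
      ∑ w ∈ s, η w + (if u ∈ s then μ * (η (u + 1) - η u) else 0) -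
        (if u + 1 ∈ s then μ * (η (u + 1) - η u) else 0) := by
  simp only [deffUpdate_apply, sum_sub_distrib, sum_add_distrib, sum_ite_eq]

variable {v n} in
lemma rightAverage_deffUpdate_of_ne {u : ℤ} (hvu : v ≤ u) (hne : u ≠ v + n) :
    rightAverage (deffUpdate μ u η) v n = rightAverage η v n := by
  have mem_iff : u + 1 ∈ Icc v (v + n) ↔ u ∈ Icc v (v + n) := by
    simp only [mem_Icc]
    lia
  simp only [rightAverage, sum_deffUpdate, mem_iff, add_sub_cancel_right]

lemma add_one_mul_rightAverage_deffUpdate_self :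
    ((n : ℝ) + 1) * rightAverage (deffUpdate μ (v + n) η) v n =
      (n + 1) * rightAverage η v n + μ * (η (v + n + 1) - η (v + n)) := by
  simp [add_one_mul_rightAverage, sum_deffUpdate]

-- In terms of the partial sums `S k = k * rightAverage η v (k - 1)`, this says that the update
-- replaces `S (n + 1)` by `(1 - 2 * μ) * S (n + 1) + μ * (S n + S (n + 2))`.
lemma rightAverage_deffUpdate_self :
    rightAverage (deffUpdate μ (v + n) η) v n =
      (1 - 2 * μ) * rightAverage η v n +
        2 * μ * (n / (2 * (n + 1)) * rightAverage η v (n - 1) +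
          (n + 2) / (2 * (n + 1)) * rightAverage η v (n + 1)) := by
  have hpred := add_one_mul_rightAverage_eq_mul_add η v n
  have hsucc := add_one_mul_rightAverage_eq_mul_add η v (n + 1)
  have hupdate := add_one_mul_rightAverage_deffUpdate_self μ η v n
  rw [Nat.add_sub_cancel] at hsucc
  push_cast [← add_assoc] at hsucc
  field_simp
  linear_combination hupdate - μ * hsucc + μ * hpred

end

section

variable {μ : ℝ} {K : Set ℝ} {η : ℤ → ℝ} {v : ℤ}

lemma rightAverage_deffUpdate_mem (hμ : μ ∈ Set.Icc (0 : ℝ) (1 / 2)) (hK : Convex ℝ K)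
    (hη : ∀ n, rightAverage η v n ∈ K) {u : ℤ} (hvu : v ≤ u) (n : ℕ) :
    rightAverage (deffUpdate μ u η) v n ∈ K := by
  obtain ⟨hμ0, hμ1⟩ := hμ
  obtain rfl | hne := eq_or_ne u (v + n)
  · have neighbors_mem : n / (2 * (n + 1)) * rightAverage η v (n - 1) +
        (n + 2) / (2 * (n + 1)) * rightAverage η v (n + 1) ∈ K :=
      hK (hη (n - 1)) (hη (n + 1)) (by positivity) (by positivity) (by field_simp; ring)
    rw [rightAverage_deffUpdate_self]
    exact hK (hη n) neighbors_mem (by linarith) (by linarith) (by ring)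
  · rw [rightAverage_deffUpdate_of_ne μ η hvu hne]
    exact hη n

theorem eps_flat_right_preserved_general (hμ : μ ∈ Set.Icc (0 : ℝ) (1 / 2)) (hK : Convex ℝ K)
    (hη : ∀ n, rightAverage η v n ∈ K) (l : List ℤ) (hl : ∀ u ∈ l, v ≤ u) :
    ∀ n, rightAverage (l.foldl (fun ξ u => deffUpdate μ u ξ) η) v n ∈ K :=
  List.foldlRecOn (motive := fun ξ => ∀ n, rightAverage ξ v n ∈ K) l _ hη
    fun _ hξ u hu => rightAverage_deffUpdate_mem hμ hK hξ (hl u hu)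

end

/-- If vertex `v` is `ε`-flat to the right with respect to a bounded profile `η` and
a finite sequence of elementary updates is applied, all on edges `⟨u,u+1⟩` with
`u ≥ v` (so vertex `v` never interacts with vertex `v−1`), then the resulting value
at vertex `v` still lies within `ε` of `m`. -/
theorem eps_flat_right_preserved (μ : ℝ) (hμ : μ ∈ Set.Ioc (0 : ℝ) (1 / 2))
    (ε : ℝ) (hε : 0 < ε) (m : ℝ) (v : ℤ) (η : ℤ → ℝ)
    (hbdd : ∃ M : ℝ, ∀ u : ℤ, |η u| ≤ M)
    (hflat : ∀ n : ℕ, ((n : ℝ) + 1)⁻¹ * ∑ u ∈ Finset.Icc v (v + n), η u ∈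
      Set.Icc (m - ε) (m + ε))
    (l : List ℤ) (hl : ∀ u ∈ l, v ≤ u) :
    (l.foldl (fun ξ u => deffUpdate μ u ξ) η) v ∈ Set.Icc (m - ε) (m + ε) := by
  rw [← rightAverage_zero (l.foldl _ η) v]
  exact eps_flat_right_preserved_general ⟨hμ.1.le, hμ.2⟩ (convex_Icc _ _) hflat l hl 0
end

section
/- Let η : ℕ → ℝ, m ∈ ℝ and ε ≥ 0 satisfy (1/(n+1))·∑_{k=0}^{n} η(k) ∈ [m−ε, m+ε] for every n ≥ 0. Let ξ : ℕ → ℝ be nonnegative, nonincreasing, with finite support and ∑_{k} ξ(k) = 1. Then the weighted average satisfies ∑_{k} ξ(k)·η(k) ∈ [m−ε, m+ε]. -/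
/-!
A nonincreasing nonnegative sequence `ξ` vanishing at infinity is the mixture
`∑ₙ (n + 1)(ξ n - ξ (n + 1)) • Uₙ` of the uniform weights `Uₙ` on `{0, …, n}`. Summation by parts
therefore writes a `ξ`-weighted average of `η` as a convex combination of the initial averages of
`η`, so it stays in every convex set containing those. Weights with infinite support are truncated
and renormalized, and the limit is taken in a closed set.
-/

open Filter Finset Topology

section Algebra

variable {𝕜 E : Type*} [Field 𝕜] [AddCommGroup E] [Module 𝕜 E]

variable (𝕜) in
/-- The average of `η 0, …, η n`. The index is the last term included, so that every average is
over a nonempty segment. -/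
def initialAvg (η : ℕ → E) (n : ℕ) : E :=
  ((n : 𝕜) + 1)⁻¹ • ∑ k ∈ range (n + 1), η k

/-- The coefficient of the uniform weights on `{0, …, n}` when the weight sequence `ξ` is written
as a mixture of uniform weights on initial segments. -/
def mixtureCoeff (ξ : ℕ → 𝕜) (n : ℕ) : 𝕜 :=
  (n + 1) * (ξ n - ξ (n + 1))

theorem mixtureCoeff_nonneg [LinearOrder 𝕜] [IsStrictOrderedRing 𝕜] {ξ : ℕ → 𝕜} (hξ : Antitone ξ)
    (n : ℕ) : 0 ≤ mixtureCoeff ξ n :=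
  mul_nonneg n.cast_add_one_pos.le (sub_nonneg.2 (hξ n.le_succ))

variable [CharZero 𝕜]

theorem mixtureCoeff_smul_initialAvg (ξ : ℕ → 𝕜) (η : ℕ → E) (n : ℕ) :
    mixtureCoeff ξ n • initialAvg 𝕜 η n = (ξ n - ξ (n + 1)) • ∑ k ∈ range (n + 1), η k := by
  rw [mixtureCoeff, initialAvg, smul_smul, mul_comm, inv_mul_cancel_left₀ n.cast_add_one_ne_zero]

theorem sum_range_mixtureCoeff_smul_initialAvg_add (ξ : ℕ → 𝕜) (η : ℕ → E) (N : ℕ) :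
    ∑ n ∈ range N, mixtureCoeff ξ n • initialAvg 𝕜 η n + ξ N • ∑ k ∈ range N, η k =
      ∑ k ∈ range N, ξ k • η k := by
  induction N with
  | zero => simp
  | succ N ih =>
    rw [sum_range_succ (fun k ↦ ξ k • η k), ← ih, sum_range_succ, mixtureCoeff_smul_initialAvg,
      sum_range_succ η]
    module

theorem sum_range_mixtureCoeff_smul_initialAvg {ξ : ℕ → 𝕜} {N : ℕ} (hN : ξ N = 0) (η : ℕ → E) :
    ∑ n ∈ range N, mixtureCoeff ξ n • initialAvg 𝕜 η n = ∑ k ∈ range N, ξ k • η k := by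
  simpa [hN] using sum_range_mixtureCoeff_smul_initialAvg_add ξ η N

theorem initialAvg_one (n : ℕ) : initialAvg 𝕜 (1 : ℕ → 𝕜) n = 1 := by
  simp [initialAvg, n.cast_add_one_ne_zero]

theorem sum_range_mixtureCoeff {ξ : ℕ → 𝕜} {N : ℕ} (hN : ξ N = 0) :
    ∑ n ∈ range N, mixtureCoeff ξ n = ∑ k ∈ range N, ξ k := by
  simpa [initialAvg_one] using sum_range_mixtureCoeff_smul_initialAvg hN (1 : ℕ → 𝕜)

theorem centerMass_mixtureCoeff_initialAvg {ξ : ℕ → 𝕜} {N : ℕ} (hN : ξ N = 0) (η : ℕ → E) :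
    (range N).centerMass (mixtureCoeff ξ) (initialAvg 𝕜 η) = (range N).centerMass ξ η := by
  rw [centerMass, centerMass, sum_range_mixtureCoeff hN, sum_range_mixtureCoeff_smul_initialAvg hN]

end Algebra

theorem antitone_indicator_Iio {α β : Type*} [Preorder α] [Preorder β] [Zero β] {f : α → β}
    (hf : Antitone f) (hf_nonneg : ∀ a, 0 ≤ f a) (b : α) :
    Antitone ((Set.Iio b).indicator f) := by
  intro x y hxy
  by_cases hy : y < b
  · simpa [hy, hxy.trans_lt hy] using hf hxy
  · simpa [hy] using Set.indicator_nonneg (fun a _ ↦ hf_nonneg a) x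

section Convex

variable {𝕜 E : Type*} [Field 𝕜] [LinearOrder 𝕜] [IsStrictOrderedRing 𝕜] [AddCommGroup E]
  [Module 𝕜 E] {s : Set E} {η : ℕ → E} {ξ : ℕ → 𝕜}

theorem centerMass_range_mem_of_antitone (hs : Convex 𝕜 s) (hη : ∀ n, initialAvg 𝕜 η n ∈ s)
    (hξ_nonneg : ∀ k, 0 ≤ ξ k) (hξ : Antitone ξ) {N : ℕ} (hN : 0 < ∑ k ∈ range N, ξ k) :
    (range N).centerMass ξ η ∈ s := by
  set ζ : ℕ → 𝕜 := (Set.Iio N).indicator ξ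
  have hζ : Antitone ζ := antitone_indicator_Iio hξ hξ_nonneg N
  have hζN : ζ N = 0 := Set.indicator_of_notMem (lt_irrefl N) ξ
  have hζξ : ∀ k ∈ range N, ζ k = ξ k := fun k hk ↦
    Set.indicator_of_mem (Set.mem_Iio.2 (mem_range.1 hk)) ξ
  have hcenter : (range N).centerMass (mixtureCoeff ζ) (initialAvg 𝕜 η) =
      (range N).centerMass ξ η :=
    (centerMass_mixtureCoeff_initialAvg hζN η).trans (centerMass_congr_weights hζξ)
  have hmass : 0 < ∑ n ∈ range N, mixtureCoeff ζ n := by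
    rwa [sum_range_mixtureCoeff hζN, sum_congr rfl hζξ]
  exact hcenter ▸ hs.centerMass_mem (fun n _ ↦ mixtureCoeff_nonneg hζ n) hmass fun n _ ↦ hη n

/-- The weighted series is only assumed to converge as a limit of partial sums: `η` may oscillate
with linear growth, and then the terms `ξ k • η k` need not be unconditionally summable. -/
theorem weighted_avg_of_flat_general [TopologicalSpace 𝕜] [OrderTopology 𝕜] [TopologicalSpace E]
    [ContinuousSMul 𝕜 E] (hs : Convex 𝕜 s) (hs_closed : IsClosed s)
    (hη : ∀ n, initialAvg 𝕜 η n ∈ s) (hξ : Antitone ξ) (hξ_sum : HasSum ξ 1) {x : E}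
    (hx : Tendsto (fun N ↦ ∑ k ∈ range N, ξ k • η k) atTop (𝓝 x)) : x ∈ s := by
  have hξ_nonneg : ∀ k, 0 ≤ ξ k := hξ.le_of_tendsto hξ_sum.summable.tendsto_atTop_zero
  have hmass : Tendsto (fun N ↦ ∑ k ∈ range N, ξ k) atTop (𝓝 1) := hξ_sum.tendsto_sum_nat
  have hcenter : Tendsto (fun N ↦ (range N).centerMass ξ η) atTop (𝓝 x) := by
    simpa only [centerMass, inv_one, one_smul] using (hmass.inv₀ one_ne_zero).smul hx
  refine hs_closed.mem_of_tendsto hcenter ?_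
  filter_upwards [hmass.eventually_const_lt one_pos] with N hN
  exact centerMass_range_mem_of_antitone hs hη hξ_nonneg hξ hN

end Convex

/-- If all initial-segment averages of a sequence `η` lie within `ε` of `m`, and `ξ`
is a nonnegative, nonincreasing weight sequence with finite support summing to `1`,
then the weighted average `∑ ξ(k)·η(k)` also lies within `ε` of `m`. -/
theorem weighted_avg_of_flat (η : ℕ → ℝ) (m ε : ℝ) (hε : 0 ≤ ε)
    (hflat : ∀ n : ℕ, ((n : ℝ) + 1)⁻¹ * ∑ k ∈ Finset.range (n + 1), η k ∈
      Set.Icc (m - ε) (m + ε))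
    (ξ : ℕ → ℝ) (hξnonneg : ∀ k, 0 ≤ ξ k) (hξanti : Antitone ξ)
    (hξfin : (Function.support ξ).Finite) (hξsum : ∑' k, ξ k = 1) :
    ∑' k, ξ k * η k ∈ Set.Icc (m - ε) (m + ε) :=
  have hξη : Summable fun k ↦ ξ k * η k :=
    summable_of_hasFiniteSupport (hξfin.subset (Function.support_mul_subset_left ξ η))
  weighted_avg_of_flat_general (convex_Icc _ _) isClosed_Icc hflat hξanti
    (hξsum ▸ (summable_of_hasFiniteSupport hξfin).hasSum) hξη.hasSum.tendsto_sum_nat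
end
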